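/- arXiv:1906.04460 — 6 statements merged into one kernel-verified Lean document; each statement's English description precedes it below -/
import Mathlib

section
/- Let n ≥ 2 and let K be a field of characteristic p > 0 with p dividing n. Then the images ē_2, ē_3, …, ē_n of the elementary symmetric polynomials e_2, …, e_n in the quotient ring P̄ = P/(e_1) are algebraically independent over K. -/
/-! The argument works over any field, in any characteristic. A relation
`F(ē₂, …, ēₙ) = 0` means `F(e₂, …, eₙ) = e₁ * g` in `P`. The left side is symmetric and `e₁` is a
symmetric non-zero-divisor, so `g` is symmetric (`isSymmetric_of_mul_left`) and hence, by the
fundamental theorem on symmetric polynomials, `g = G(e₁, …, eₙ)`. Algebraic independence of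
`e₁, …, eₙ` in `P` lifts this to `F(Y₂, …, Yₙ) = Y₁ * G(Y₁, …, Yₙ)`, and `Y₁ = 0` gives `F = 0`. -/

/-- In a domain of polynomials, the cofactor of a nonzero symmetric factor of a symmetric
polynomial is symmetric. -/
lemma isSymmetric_of_mul_left {σ R : Type*} [CommRing R] [IsDomain R]
    {a g : MvPolynomial σ R} (ha : a.IsSymmetric) (ha0 : a ≠ 0) (h : (a * g).IsSymmetric) :
    g.IsSymmetric := by
  intro e
  have h1 := h e
  rw [map_mul, ha e] at h1
  exact mul_left_cancel₀ ha0 h1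

/-- for `n ≥ 2` and `char K = p > 0` with `p ∣ n`, the images
`ē₂, …, ēₙ` of the elementary symmetric polynomials in `P̄ = P/(e₁)` are
algebraically independent over `K`. -/
theorem esymm_images_algebraicIndependent (n : ℕ) (hn : 2 ≤ n) (K : Type) [Field K]
    (p : ℕ) [CharP K p] (hp : 0 < p) (hpn : p ∣ n)
    (I : Ideal (MvPolynomial (Fin n) K))
    (hI : I = Ideal.span {MvPolynomial.esymm (Fin n) K 1}) :
    AlgebraicIndependent K (fun k : Fin (n - 1) =>
      Ideal.Quotient.mk I (MvPolynomial.esymm (Fin n) K (k.val + 2))) := by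
  classical
  clear hpn hp
  obtain ⟨m, rfl⟩ : ∃ m, n = m + 1 := ⟨n - 1, by omega⟩
  change AlgebraicIndependent K (fun k : Fin m =>
      Ideal.Quotient.mk I (MvPolynomial.esymm (Fin (m + 1)) K (k.val + 2)))
  rw [algebraicIndependent_iff]
  intro F hF
  set Φ := MvPolynomial.esymmAlgHom (Fin (m + 1)) K (m + 1) with hΦ
  have hinj : Function.Injective Φ := MvPolynomial.esymmAlgHom_fin_injective K le_rfl
  have hΦX : ∀ i, (Φ (MvPolynomial.X i) : MvPolynomial (Fin (m + 1)) K)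
      = MvPolynomial.esymm (Fin (m + 1)) K (i.val + 1) := fun i => by
    rw [hΦ, MvPolynomial.esymmAlgHom_apply, MvPolynomial.aeval_X]
  have he1 : (Φ (MvPolynomial.X 0) : MvPolynomial (Fin (m + 1)) K)
      = MvPolynomial.esymm (Fin (m + 1)) K 1 := hΦX 0
  have hne : MvPolynomial.esymm (Fin (m + 1)) K 1 ≠ 0 := by
    rw [← he1]
    intro h
    exact MvPolynomial.X_ne_zero (R := K) (0 : Fin (m + 1))
      (hinj ((Subtype.ext h).trans (map_zero Φ).symm))
  have hquot : MvPolynomial.aeval (fun k : Fin m =>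
        Ideal.Quotient.mk I (MvPolynomial.esymm (Fin (m + 1)) K (k.val + 2))) F
      = Ideal.Quotient.mk I (Φ (MvPolynomial.rename Fin.succ F)) := by
    rw [hΦ, MvPolynomial.esymmAlgHom_apply, MvPolynomial.aeval_rename,
      ← Ideal.Quotient.mkₐ_eq_mk K, ← MvPolynomial.comp_aeval_apply]
    rfl
  rw [hquot, Ideal.Quotient.eq_zero_iff_mem, hI, Ideal.mem_span_singleton] at hF
  obtain ⟨g, hg⟩ := hF
  have hgs : g.IsSymmetric := by
    refine isSymmetric_of_mul_left (MvPolynomial.esymm_isSymmetric _ _ 1) hne ?_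
    rw [← hg]
    exact (Φ (MvPolynomial.rename Fin.succ F)).2
  obtain ⟨G, hG⟩ := MvPolynomial.esymmAlgHom_fin_surjective K (le_refl (m + 1)) ⟨g, hgs⟩
  have key : MvPolynomial.rename Fin.succ F = MvPolynomial.X 0 * G := by
    apply hinj
    apply Subtype.ext
    rw [map_mul, hG, hg, ← he1]
    rfl
  have h0 := congrArg (MvPolynomial.aeval
    (Fin.cons 0 MvPolynomial.X : Fin (m + 1) → MvPolynomial (Fin m) K)) key
  rw [MvPolynomial.aeval_rename, map_mul, MvPolynomial.aeval_X, Fin.cons_zero, zero_mul] at h0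
  have hX : (Fin.cons 0 MvPolynomial.X : Fin (m + 1) → MvPolynomial (Fin m) K) ∘ Fin.succ
      = MvPolynomial.X := by
    funext i
    simp
  rwa [hX, MvPolynomial.aeval_X_left_apply] at h0
end

section
/- Let n > 2 and let K be a field of characteristic p > 0 with p dividing n. Then the subalgebra of S_n-invariant elements of P̄ = P/(e_1) equals the K-subalgebra generated by the images ē_2, ē_3, …, ē_n of the elementary symmetric polynomials; since these n−1 elements are algebraically independent over K, the invariant ring P̄^{S_n} is a polynomial ring in n−1 variables over K. -/
/-!
Write `x i` for the image of `X i` in `P̄`. The ring `P̄` is a domain, because `e₁` is a linear form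
with coefficients `1` and so is prime, and the `x i` are distinct, because for `n > 2` some point
of the hyperplane `∑ v i = 0` has `v i ≠ v j`.

*Invariants* (`mem_of_invariant`). Let `A = K[ē₂, …, ēₙ]` and let `f` be invariant. Starting from
`f ∈ P̄ = A[x i : i]`, the variables are removed one at a time (`mem_adjoin_of_mem_adjoin_insert`).
If `f ∈ B[x i]` with `B = A[x j : j ∈ s]` and `i ∉ s`, then `f = F (x i)` for some `F ∈ B[T]`, and
`F` may be reduced modulo the monic polynomial `∏_{j ∉ s} (T - x j)`, which has coefficients in `B`.
For `j ∉ s` the transposition `(i j)` fixes `B` and `f`, so `F (x j) = f`. Thus `F - f`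
has more roots than its degree, `F` is the constant `f`, and `f ∈ B`.

*Independence*. A relation between `ē₂, …, ēₙ` lifts to `g(e₂, …, eₙ) = e₁ h` in `P`. As `P` is a
domain, `h` is symmetric, hence a polynomial in the `eₖ`; the algebraic independence of
`e₁, …, eₙ` then makes `X₁` divide `g`, a polynomial not involving `X₁`, and so `g = 0`.
-/

open Polynomial in
/-- The complementary product `∏_{j ∉ s} (T - x j)` is the quotient of `∏_j (T - x j)` by
`∏_{j ∈ s} (T - x j)`. -/
lemma exists_map_eq_prod_compl {n : ℕ} {K R : Type*} [Field K] [CommRing R] [IsDomain R]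
    [Algebra K R] (x : Fin n → R) (B : Subalgebra K R) (s : Finset (Fin n))
    (hB : ∀ k, MvPolynomial.aeval x (MvPolynomial.esymm (Fin n) K k) ∈ B)
    (hs : ∀ j ∈ s, x j ∈ B) :
    ∃ q : B[X], q.Monic ∧ q.map (algebraMap B R) = ∏ j ∈ sᶜ, (X - C (x j)) := by
  have hQ : (∏ j, (X - C (x j))) ∈ lifts (algebraMap B R) := by
    rw [lifts_iff_coeff_lifts]
    intro k
    by_cases hk : k ≤ n
    · have h := Multiset.prod_X_sub_C_coeff (Finset.univ.val.map x) (k := k) (by simpa using hk)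
      rw [← MvPolynomial.aeval_esymm_eq_multiset_esymm (Fin n) K, Multiset.map_map] at h
      have h2 : (∏ j, (X - C (x j))).coeff k ∈ B :=
        (congrArg (· ∈ B) h).mpr (B.mul_mem (B.pow_mem (B.neg_mem B.one_mem) _) (hB _))
      exact ⟨⟨_, h2⟩, rfl⟩
    · refine ⟨0, ?_⟩
      rw [map_zero, coeff_eq_zero_of_natDegree_lt]
      simpa [natDegree_prod_of_monic _ _ fun j _ => monic_X_sub_C (x j)] using hk
  obtain ⟨Q, hQ⟩ := hQ
  rw [coe_mapRingHom] at hQ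
  let r : B[X] := ∏ j ∈ s.attach, (X - C ⟨x j, hs j j.2⟩)
  have hr : r.Monic := monic_prod_of_monic _ _ fun j _ => monic_X_sub_C _
  have hrm : r.map (algebraMap B R) = ∏ j ∈ s, (X - C (x j)) := by
    rw [Polynomial.map_prod, ← Finset.prod_attach s]
    exact Finset.prod_congr rfl fun j _ => by simp
  have hq : (Q /ₘ r).map (algebraMap B R) = ∏ j ∈ sᶜ, (X - C (x j)) := by
    rw [map_divByMonic _ hr, hQ, hrm, ← Finset.prod_mul_prod_compl s, mul_divByMonic_cancel_left]
    exact monic_prod_of_monic _ _ fun j _ => monic_X_sub_C _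
  refine ⟨_, ?_, hq⟩
  refine monic_of_injective (f := algebraMap B R) Subtype.val_injective ?_
  rw [hq]
  exact monic_prod_of_monic _ _ fun j _ => monic_X_sub_C _

open Polynomial in
/-- The elimination step, by interpolation at the points `x j`, `j ∉ s`: an element of `B[x i]`
already lies in `B` if for each `j ∉ s` some endomorphism over `B` (in the application, the
transposition `(i j)`) fixes it and sends `x i` to `x j`. -/
lemma mem_adjoin_of_mem_adjoin_insert {n : ℕ} {K R : Type*} [Field K] [CommRing R] [IsDomain R]
    [Algebra K R] (x : Fin n → R) (hx : Function.Injective x) (B : Subalgebra K R)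
    (s : Finset (Fin n)) (i : Fin n) (hi : i ∉ s) (f : R)
    (hB : ∀ k, MvPolynomial.aeval x (MvPolynomial.esymm (Fin n) K k) ∈ B)
    (hs : ∀ j ∈ s, x j ∈ B)
    (hφ : ∀ j ∉ s, ∃ φ : R →ₐ[K] R, (∀ b ∈ B, φ b = b) ∧ φ f = f ∧ φ (x i) = x j)
    (hf : f ∈ Algebra.adjoin B {x i}) : f ∈ B := by
  classical
  obtain ⟨q, hq, hqm⟩ := exists_map_eq_prod_compl x B s hB hs
  rw [Algebra.adjoin_singleton_eq_range_aeval] at hf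
  obtain ⟨F, hF⟩ := hf
  have hF : aeval (x i) F = f := hF
  have hroot : ∀ j ∉ s, aeval (x j) q = 0 := fun j hj => by
    rw [aeval_def, ← eval_map, hqm, eval_prod]
    exact Finset.prod_eq_zero (Finset.mem_compl.2 hj) (by simp)
  have hFi : aeval (x i) (F %ₘ q) = f := by
    rw [← hF]
    conv_rhs => rw [← modByMonic_add_div F q]
    simp [hroot i hi]
  have hFj : ∀ j ∉ s, aeval (x j) (F %ₘ q) = f := fun j hj => by
    obtain ⟨φ, hφB, hφf, hφi⟩ := hφ j hj
    have h := congrArg φ hFi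
    rw [hφf, aeval_def, ← AlgHom.coe_toRingHom, hom_eval₂, AlgHom.coe_toRingHom, hφi] at h
    rw [aeval_def, ← h]
    congr 1
    ext b
    exact (hφB b b.2).symm
  have hpos : 0 < (sᶜ.image x).card := Finset.card_pos.2 ⟨x i, by
    simp only [Finset.mem_image]; exact ⟨i, by simpa using hi, rfl⟩⟩
  have hconst : (F %ₘ q).map (algebraMap B R) = C f := by
    refine eq_of_degrees_lt_of_eval_finset_eq (sᶜ.image x) ?_ ?_ ?_
    · refine degree_map_le.trans_lt ((degree_modByMonic_lt F hq).trans_eq ?_)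
      rw [← hq.degree_map (algebraMap B R), hqm, degree_prod,
        Finset.card_image_of_injective _ hx]
      simp
    · exact degree_C_le.trans_lt (by exact_mod_cast hpos)
    · intro y hy
      obtain ⟨j, hj, rfl⟩ := Finset.mem_image.1 hy
      rw [eval_map, eval_C]
      exact hFj j (Finset.mem_compl.1 hj)
  have h0 := congrArg (fun r => r.coeff 0) hconst
  simp only [coeff_map, coeff_C_zero] at h0
  rw [← h0]
  exact ((F %ₘ q).coeff 0).2

/-- Invariant elements of a domain generated by distinct permuted elements `x i` lie in every
subalgebra of invariants that contains the elementary symmetric functions of the `x i`. -/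
lemma mem_of_invariant {n : ℕ} {K R : Type*} [Field K] [CommRing R] [IsDomain R]
    [Algebra K R] (x : Fin n → R) (hx : Function.Injective x)
    (hgen : Algebra.adjoin K (Set.range x) = ⊤) (φ : Equiv.Perm (Fin n) → R →ₐ[K] R)
    (hφ : ∀ σ i, φ σ (x i) = x (σ i)) (A : Subalgebra K R)
    (hA : ∀ k, MvPolynomial.aeval x (MvPolynomial.esymm (Fin n) K k) ∈ A)
    (hAφ : ∀ σ, ∀ a ∈ A, φ σ a = a) (f : R) (hf : ∀ σ, φ σ f = f) : f ∈ A := by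
  suffices h : ∀ s : Finset (Fin n), f ∈ A ⊔ Algebra.adjoin K (x '' (sᶜ : Finset (Fin n))) by
    simpa using h Finset.univ
  intro s
  induction s using Finset.induction with
  | empty => simp [hgen]
  | insert i t hi ih =>
    refine mem_adjoin_of_mem_adjoin_insert x hx _ (insert i t)ᶜ i (by simp) f
      (fun k => le_sup_left (a := A) (hA k))
      (fun j hj => le_sup_right (a := A) (Algebra.subset_adjoin ⟨j, hj, rfl⟩)) ?_ ?_
    · intro j hj
      refine ⟨φ (Equiv.swap i j), fun b hb => ?_, hf _, by simp [hφ]⟩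
      have hle : A ⊔ Algebra.adjoin K (x '' ((insert i t)ᶜ : Finset (Fin n))) ≤
          AlgHom.equalizer (φ (Equiv.swap i j)) (AlgHom.id K R) := by
        refine sup_le (fun a ha => hAφ _ a ha) (Algebra.adjoin_le ?_)
        rintro _ ⟨k, hk, rfl⟩
        change φ _ (x k) = x k
        rw [hφ, Equiv.swap_apply_of_ne_of_ne]
        · rintro rfl
          simp at hk
        · rintro rfl
          exact hj hk
      exact hle hb
    · set B := A ⊔ Algebra.adjoin K (x '' ((insert i t)ᶜ : Finset (Fin n))) 
      have hle : A ⊔ Algebra.adjoin K (x '' (tᶜ : Finset (Fin n))) ≤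
          (Algebra.adjoin B {x i}).restrictScalars K := by
        have hB : ∀ b ∈ B, b ∈ (Algebra.adjoin B {x i}).restrictScalars K := fun b hb =>
          (Algebra.adjoin B {x i}).algebraMap_mem ⟨b, hb⟩
        refine sup_le (fun a ha => hB _ (le_sup_left (a := A) ha)) (Algebra.adjoin_le ?_)
        rintro _ ⟨k, hk, rfl⟩
        by_cases hki : k = i
        · rw [hki, SetLike.mem_coe, Subalgebra.mem_restrictScalars]
          exact Algebra.subset_adjoin (Set.mem_singleton (x i))
        · have hk' : k ∈ ((insert i t)ᶜ : Finset (Fin n)) := by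
            simpa [hki] using hk
          have hkB : x k ∈ Algebra.adjoin K (x '' ((insert i t)ᶜ : Finset (Fin n))) :=
            Algebra.subset_adjoin ⟨k, hk', rfl⟩
          exact hB _ (le_sup_right (a := A) hkB)
      exact hle ih

open MvPolynomial

lemma prime_esymm_one {n : ℕ} (hn : 2 < n) (K : Type*) [Field K] :
    Prime (esymm (Fin n) K 1) := by
  have : Nontrivial (Fin n) := Fin.nontrivial_iff_two_le.2 hn.le
  have h := irreducible_sumSMulX (R := K) (c := Finsupp.equivFunOnFinite.symm fun _ : Fin n => 1)
    ⟨⟨0, by omega⟩, by simp⟩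
    (fun r hr => isUnit_of_dvd_one (by simpa using hr ⟨0, by omega⟩))
  have e : sumSMulX (R := K) (Finsupp.equivFunOnFinite.symm fun _ : Fin n => 1) =
      esymm (Fin n) K 1 := by
    rw [sumSMulX, Finsupp.linearCombination_apply, Finsupp.sum_fintype _ _ (by simp), esymm_one]
    simp
  exact (e ▸ h).prime

/-- The restrictions of the coordinates to the hyperplane `∑ v i = 0` are distinct: the point with
`v i = 1`, `v k = -1` for a third index `k`, and `v = 0` elsewhere separates `X i` from `X j`. -/
lemma mk_X_injective {n : ℕ} (hn : 2 < n) (K : Type*) [Field K] :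
    Function.Injective fun i : Fin n =>
      Ideal.Quotient.mk (Ideal.span {esymm (Fin n) K 1}) (X i) := by
  intro i j hij
  by_contra hne
  obtain ⟨k, hk⟩ : ∃ k, k ∉ ({i, j} : Finset (Fin n)) := by
    by_contra! h
    have := Finset.card_le_card (fun a _ => h a : (Finset.univ : Finset (Fin n)) ⊆ {i, j})
    have h2 := Finset.card_le_two (a := i) (b := j)
    simp only [Finset.card_univ, Fintype.card_fin] at this
    omega
  simp only [Finset.mem_insert, Finset.mem_singleton, not_or] at hk
  rw [Ideal.Quotient.eq, Ideal.mem_span_singleton] at hij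
  obtain ⟨h, hh⟩ := hij
  have := congrArg (eval (Pi.single i (1 : K) - Pi.single k 1)) hh
  simp [esymm_one, Ne.symm hk.1, Ne.symm hk.2, Ne.symm hne, Pi.single_apply] at this

lemma algebraicIndependent_mk_esymm (m : ℕ) (K : Type*) [Field K]
    (h1 : Prime (esymm (Fin (m + 1)) K 1)) :
    AlgebraicIndependent K (fun k : Fin m =>
      Ideal.Quotient.mk (Ideal.span {esymm (Fin (m + 1)) K 1})
        (esymm (Fin (m + 1)) K (k.val + 2))) := by
  rw [algebraicIndependent_iff]
  intro g hg
  have hg' : Ideal.Quotient.mk (Ideal.span {esymm (Fin (m + 1)) K 1})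
      (aeval (fun k : Fin m => esymm (Fin (m + 1)) K (k.val + 2)) g) = 0 := by
    rw [← hg, ← Ideal.Quotient.mkₐ_eq_mk K, ← comp_aeval_apply]
  rw [Ideal.Quotient.eq_zero_iff_mem, Ideal.mem_span_singleton] at hg'
  obtain ⟨h, hh⟩ := hg'
  have hren : aeval (fun k : Fin m => esymm (Fin (m + 1)) K (k.val + 2)) g =
      (esymmAlgHom (Fin (m + 1)) K (m + 1) (rename Fin.succ g)).val := by
    rw [esymmAlgHom_apply, aeval_rename]
    rfl
  have hsymm : h.IsSymmetric := fun σ => by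
    have h2 := congrArg (rename σ) hh
    rw [hren, (esymmAlgHom (Fin (m + 1)) K (m + 1) (rename Fin.succ g)).2 σ, ← hren, hh, map_mul,
      esymm_isSymmetric] at h2
    exact (mul_left_cancel₀ h1.ne_zero h2).symm
  obtain ⟨H, hH⟩ := esymmAlgHom_fin_surjective (R := K) (n := m + 1) (m := m + 1) le_rfl ⟨h, hsymm⟩
  have hdvd : rename Fin.succ g = X 0 * H := by
    apply esymmAlgHom_fin_injective (R := K) (n := m + 1) (m := m + 1) le_rfl
    apply Subtype.ext
    rw [← hren, hh, map_mul, hH]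
    simp [esymmAlgHom]
  -- Setting the variable that stands for `e₁` to zero recovers `g`.
  have h0 := congrArg (aeval (Fin.cons 0 X : Fin (m + 1) → MvPolynomial (Fin m) K)) hdvd
  rw [aeval_rename, map_mul, aeval_X, Fin.cons_zero, zero_mul] at h0
  rw [← h0]
  exact (aeval_X_left_apply g).symm


/-- for `n > 2` and `char K = p > 0` with `p ∣ n`, the subalgebra of
`Sₙ`-invariant elements of `P̄ = P/(e₁)` (elements fixed by the automorphism of the
quotient induced by every permutation of the variables) equals the `K`-subalgebra
generated by the images `ē₂, …, ēₙ` of the elementary symmetric polynomials, and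
these `n − 1` generators are algebraically independent over `K`; hence the invariant
ring is a polynomial ring in `n − 1` variables over `K`. -/
theorem invariants_eq_adjoin_esymm_images (n : ℕ) (hn : 2 < n) (K : Type) [Field K]
    (p : ℕ) [CharP K p] (hp : 0 < p) (hpn : p ∣ n)
    (I : Ideal (MvPolynomial (Fin n) K))
    (hI : I = Ideal.span {MvPolynomial.esymm (Fin n) K 1}) :
    ({x : MvPolynomial (Fin n) K ⧸ I |
        ∀ (σ : Equiv.Perm (Fin n)) (f : MvPolynomial (Fin n) K),
          Ideal.Quotient.mk I f = x →
            Ideal.Quotient.mk I (MvPolynomial.rename σ f) = x}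
      = (Algebra.adjoin K (Set.range fun k : Fin (n - 1) =>
          Ideal.Quotient.mk I (MvPolynomial.esymm (Fin n) K (k.val + 2))) :
            Subalgebra K (MvPolynomial (Fin n) K ⧸ I))) ∧
    AlgebraicIndependent K (fun k : Fin (n - 1) =>
      Ideal.Quotient.mk I (MvPolynomial.esymm (Fin n) K (k.val + 2))) := by

  have h1 := prime_esymm_one hn K
  subst hI
  obtain ⟨m, rfl⟩ : ∃ m, n = m + 1 := ⟨n - 1, by omega⟩
  set I : Ideal (MvPolynomial (Fin (m + 1)) K) := Ideal.span {esymm (Fin (m + 1)) K 1} with hI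
  refine ⟨?_, algebraicIndependent_mk_esymm m K h1⟩
  have hprime : I.IsPrime := (Ideal.span_singleton_prime h1.ne_zero).2 h1
  let x : Fin (m + 1) → MvPolynomial (Fin (m + 1)) K ⧸ I := fun i => Ideal.Quotient.mk I (X i)
  have hxmk : ∀ f, aeval x f = Ideal.Quotient.mk I f := fun f => by
    have h : aeval x = Ideal.Quotient.mkₐ K I := by
      ext i
      rw [aeval_X, Ideal.Quotient.mkₐ_eq_mk]
    rw [h, Ideal.Quotient.mkₐ_eq_mk]
  have hker : ∀ (σ : Equiv.Perm (Fin (m + 1))), ∀ a ∈ I,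
      ((Ideal.Quotient.mkₐ K I).comp (rename σ)) a = 0 := fun σ a ha => by
    obtain ⟨b, rfl⟩ := Ideal.mem_span_singleton.1 ha
    rw [AlgHom.comp_apply, map_mul, esymm_isSymmetric, Ideal.Quotient.mkₐ_eq_mk,
      Ideal.Quotient.eq_zero_iff_mem]
    exact Ideal.mul_mem_right _ _ (Ideal.mem_span_singleton_self _)
  let φ : Equiv.Perm (Fin (m + 1)) →
      (MvPolynomial (Fin (m + 1)) K ⧸ I) →ₐ[K] (MvPolynomial (Fin (m + 1)) K ⧸ I) := fun σ =>
    Ideal.Quotient.liftₐ I ((Ideal.Quotient.mkₐ K I).comp (rename σ)) (hker σ)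
  have hφmk : ∀ σ f, φ σ (Ideal.Quotient.mk I f) = Ideal.Quotient.mk I (rename σ f) :=
    fun σ f => rfl
  set A := Algebra.adjoin K (Set.range fun k : Fin (m + 1 - 1) =>
    Ideal.Quotient.mk I (esymm (Fin (m + 1)) K (k.val + 2)))
  have hAφ : ∀ σ, ∀ a ∈ A, φ σ a = a := fun σ => by
    have hle : A ≤ AlgHom.equalizer (φ σ) (AlgHom.id K _) := by
      refine Algebra.adjoin_le ?_
      rintro _ ⟨k, rfl⟩
      change φ σ _ = _
      rw [hφmk, esymm_isSymmetric]
      rfl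
    exact fun a ha => hle ha
  have hA : ∀ k, aeval x (esymm (Fin (m + 1)) K k) ∈ A := fun k => by
    rw [hxmk]
    match k with
    | 0 => simp
    | 1 =>
      rw [Ideal.Quotient.eq_zero_iff_mem.2 (Ideal.mem_span_singleton_self _)]
      exact A.zero_mem
    | k + 2 =>
      by_cases hk : k < m
      · exact Algebra.subset_adjoin ⟨⟨k, hk⟩, rfl⟩
      · have : esymm (Fin (m + 1)) K (k + 2) = 0 := by
          rw [esymm, Finset.powersetCard_eq_empty.2 (by simp; omega), Finset.sum_empty]
        rw [this, map_zero]
        exact A.zero_mem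
  have hgen : Algebra.adjoin K (Set.range x) = ⊤ := by
    rw [Algebra.adjoin_range_eq_range_aeval, AlgHom.range_eq_top]
    intro y
    obtain ⟨f, rfl⟩ := Ideal.Quotient.mk_surjective y
    exact ⟨f, hxmk f⟩
  ext y
  constructor
  · intro hy
    refine mem_of_invariant x (mk_X_injective hn K) hgen φ (fun σ i => ?_) A hA hAφ y fun σ => ?_
    · rw [hφmk, rename_X]
    · obtain ⟨f, rfl⟩ := Ideal.Quotient.mk_surjective y
      exact hy σ f rfl
  · rintro hy σ f rfl
    exact hAφ σ _ hy
end

section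
/- Let B be a Noetherian integral domain that is integrally closed in its field of fractions Frac B, and let I ⊆ B be an ideal of height at least 2. Let x ∈ Frac B be such that for every nonzero f ∈ I there exist m ∈ ℕ and b ∈ B with f^m · x = b (i.e., x lies in the image of the localization B_f inside Frac B for every nonzero f ∈ I). Then x lies in (the image of) B. (Equivalently: any rational function on the affine normal variety Spec B that is regular on the complement of the codimension-≥2 closed set V(I) extends to a regular function on Spec B.) -/
/-!
Suppose `x ∉ B`. The class of `x` in the `B`-module `Frac B / B` is nonzero and `B` is Noetherian, so the
annihilator `(B : x)` lies in an associated prime `𝔭 = (B : y)` with `y ∈ Frac B`, `y ∉ B`. Every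
`f ∈ I` has a power in `(B : x) ⊆ 𝔭`, hence `I ≤ 𝔭`, and there is a prime `0 ≠ 𝔮 < 𝔭`.

If `y𝔭 ⊆ 𝔭`, then `y` is integral over `B` (`exists_eq_of_mul_mem_ideal`). Otherwise some `a ∈ 𝔭`
has `ay = u ∉ 𝔭`. For `b ∈ 𝔭`, writing `by = c ∈ B`, one has `ub = ac`; taking `b ∈ 𝔭 \ 𝔮` shows
that `a ∉ 𝔮`, and taking `b ∈ 𝔮` then shows that `c ∈ 𝔮`. Thus `y𝔮 ⊆ 𝔮`, and `y` is again
integral over `B`. As `B` is normal, `y ∈ B` in both cases, a contradiction (`not_lt_of_mul_mem`). This replaces the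
usual appeal to Krull's principal ideal theorem and discrete valuation rings.
-/

/-- The determinant trick: an element of the fraction field of a Noetherian normal domain that
multiplies a nonzero ideal into itself belongs to the domain. -/
lemma exists_eq_of_mul_mem_ideal {B : Type*} [CommRing B] [IsDomain B] [IsNoetherianRing B]
    [IsIntegrallyClosed B] {J : Ideal B} (hJ : J ≠ ⊥) (y : FractionRing B)
    (h : ∀ b ∈ J, ∃ c ∈ J, algebraMap B (FractionRing B) b * y = algebraMap B _ c) :
    ∃ b : B, algebraMap B (FractionRing B) b = y := by
  apply IsIntegrallyClosed.algebraMap_eq_of_integral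
  refine isIntegral_of_smul_mem_submodule
    (Submodule.map (Algebra.linearMap B (FractionRing B)) J) ?_ ?_ y ?_
  · obtain ⟨a, ha, ha0⟩ := Submodule.exists_mem_ne_zero_of_ne_bot hJ
    refine (Submodule.ne_bot_iff _).mpr ⟨_, ⟨a, ha, rfl⟩, ?_⟩
    exact (IsFractionRing.to_map_eq_zero_iff (K := FractionRing B)).not.mpr ha0
  · exact Submodule.FG.map _ (IsNoetherian.noetherian J)
  · rintro _ ⟨b, hb, rfl⟩
    obtain ⟨c, hc, e⟩ := h b hb
    refine ⟨c, hc, ?_⟩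
    rw [smul_eq_mul, mul_comm]
    exact e.symm

/-- An ideal `P` with `yP ⊆ B` for some `y ∉ B` contains no nonzero prime strictly. For
`P = (B : y)` prime, this says that `P` has height at most one. -/
lemma not_lt_of_mul_mem {B : Type*} [CommRing B] [IsDomain B] [IsNoetherianRing B]
    [IsIntegrallyClosed B] {P Q : Ideal B} [Q.IsPrime] (hQ : Q ≠ ⊥) {y : FractionRing B}
    (hy : ∀ b : B, algebraMap B (FractionRing B) b ≠ y)
    (hP : ∀ b ∈ P, ∃ c, algebraMap B (FractionRing B) b * y = algebraMap B _ c) :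
    ¬ Q < P := by
  intro hlt
  have key : ∀ {a u b c : B}, algebraMap B (FractionRing B) a * y = algebraMap B _ u →
      algebraMap B (FractionRing B) b * y = algebraMap B _ c → u * b = a * c := by
    intro a u b c hu hc
    apply IsFractionRing.injective B (FractionRing B)
    rw [map_mul, map_mul, ← hu, ← hc]
    ring
  by_cases hst : ∀ b ∈ P, ∃ c ∈ P, algebraMap B (FractionRing B) b * y = algebraMap B _ c
  · obtain ⟨b, hb⟩ := exists_eq_of_mul_mem_ideal (ne_bot_of_gt hlt) y hst
    exact hy b hb
  push Not at hst
  obtain ⟨a, haP, ha⟩ := hst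
  obtain ⟨u, hu⟩ := hP a haP
  have huP : u ∉ P := fun h ↦ ha u h hu
  have huQ : u ∉ Q := fun h ↦ huP (hlt.le h)
  have haQ : a ∉ Q := by
    intro haQ
    obtain ⟨b, hbP, hbQ⟩ := SetLike.exists_of_lt hlt
    obtain ⟨c, hc⟩ := hP b hbP
    have hub : u * b ∈ Q := key hu hc ▸ Q.mul_mem_right c haQ
    exact (Ideal.IsPrime.mem_or_mem ‹_› hub).elim huQ hbQ
  obtain ⟨b, hb⟩ := exists_eq_of_mul_mem_ideal hQ y fun b hb ↦ by
    obtain ⟨c, hc⟩ := hP b (hlt.le hb)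
    have hac : a * c ∈ Q := key hu hc ▸ Q.mul_mem_left u hb
    exact ⟨c, (Ideal.IsPrime.mem_or_mem ‹_› hac).resolve_left haQ, hc⟩
  exact hy b hb

/-- Hartogs-type extension, algebraic form: let `B` be a Noetherian
integrally closed domain and `I` an ideal of height at least `2` (every prime
containing `I` dominates a chain of two strictly smaller primes).  If
`x ∈ Frac B` lies in the localization `B_f` for every nonzero `f ∈ I`
(i.e. `f ^ m * x ∈ B` for some `m`), then `x ∈ B`. -/
theorem hartogs_extension (B : Type) [CommRing B] [IsDomain B] [IsNoetherianRing B]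
    [IsIntegrallyClosed B] (I : Ideal B)
    (hht : ∀ 𝔭 : Ideal B, 𝔭.IsPrime → I ≤ 𝔭 →
      ∃ 𝔮₁ 𝔮₂ : Ideal B, 𝔮₁.IsPrime ∧ 𝔮₂.IsPrime ∧ 𝔮₁ < 𝔮₂ ∧ 𝔮₂ < 𝔭)
    (x : FractionRing B)
    (hx : ∀ f ∈ I, f ≠ 0 → ∃ (m : ℕ) (b : B),
      algebraMap B (FractionRing B) f ^ m * x = algebraMap B (FractionRing B) b) :
    ∃ b : B, x = algebraMap B (FractionRing B) b := by
  by_contra hxB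
  -- `N` is the copy of `B` inside `Frac B`; the argument takes place in `Frac B / N`.
  let N : Submodule B (FractionRing B) := LinearMap.range (Algebra.linearMap B (FractionRing B))
  have hmk : ∀ (b : B) (z : FractionRing B),
      b ∈ (⊥ : Submodule B (FractionRing B ⧸ N)).colon {N.mkQ z} ↔
        ∃ c, algebraMap B (FractionRing B) b * z = algebraMap B _ c := by
    intro b z
    rw [Submodule.mem_colon_singleton, Submodule.mem_bot, ← map_smul, Submodule.mkQ_apply,
      Submodule.Quotient.mk_eq_zero, Algebra.smul_def]
    exact ⟨fun ⟨c, hc⟩ ↦ ⟨c, hc.symm⟩, fun ⟨c, hc⟩ ↦ ⟨c, hc.symm⟩⟩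
  have hx0 : N.mkQ x ≠ 0 := by
    rw [Submodule.mkQ_apply, Ne, Submodule.Quotient.mk_eq_zero]
    exact fun ⟨b, hb⟩ ↦ hxB ⟨b, hb.symm⟩
  obtain ⟨P, hPass, hxP⟩ := exists_le_isAssociatedPrime_of_isNoetherianRing B (N.mkQ x) hx0
  obtain ⟨hPprime, y', hPy⟩ := isAssociatedPrime_iff.mp hPass
  obtain ⟨y, rfl⟩ := N.mkQ_surjective y'
  have hIP : I ≤ P := by
    intro f hf
    by_cases hf0 : f = 0
    · exact hf0 ▸ P.zero_mem
    obtain ⟨m, b, hb⟩ := hx f hf hf0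
    exact hPprime.mem_of_pow_mem m (hxP ((hmk _ _).mpr ⟨b, by rw [map_pow, hb]⟩))
  obtain ⟨Q₁, Q₂, -, hQ₂, h₁₂, h₂⟩ := hht P hPprime hIP
  refine not_lt_of_mul_mem (ne_bot_of_gt h₁₂) (y := y) ?_ ?_ h₂
  · rintro b rfl
    refine hPprime.ne_top ((Ideal.eq_top_iff_one P).mpr ?_)
    rw [hPy, hmk]
    exact ⟨b, by rw [map_one, one_mul]⟩
  · intro b hb
    rwa [hPy, hmk] at hb
end

section
/- Let B be a Noetherian integral domain that is integrally closed in its field of fractions Frac B, let I ⊆ B be an ideal of height at least 2, and let M be a finitely generated free B-module. Let x ∈ M ⊗_B Frac B be such that for every nonzero f ∈ I there exists m ∈ ℕ with f^m · x in the image of M under the canonical map M → M ⊗_B Frac B. Then x lies in the image of M. (This is the key step in the proof that for an affine Cohen–Macaulay scheme X, finite and free over a smooth affine scheme, and an open subscheme U with dim(X∖U) ≤ dim X − 2, the restriction map O(X) → O(U) is an isomorphism.) -/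
/-!
Choosing a basis of `M` and reading off coordinates reduces the claim to `M = B`: an element `a` of
`K = Frac B` that is multiplied into `B` by some power of every nonzero `f ∈ I` lies
in `B`.

Suppose it does not. Then the class of `a` in `K / B` is nonzero, so, `B` being Noetherian, its
annihilator is contained in an associated prime `𝔭 = {r | r c ∈ B}` with `c ∈ K ∖ B`, and `I ≤ 𝔭`
because `𝔭` is prime. The contradiction is that `𝔭` has height at most one
(`height_le_one_of_denominator_ideal`). Indeed `𝔭 c ⊆ 𝔭` is impossible: `𝔭` is a nonzero finitely
generated ideal, so `c` would be integral over `B`, hence in `B` by normality. So some `t ∈ 𝔭` has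
`u = t c ∈ B ∖ 𝔭`. For `r ∈ 𝔭` we get `r u = t (r c) ∈ (t)`, so any prime `𝔮 ≤ 𝔭` containing `t`
contains `r`; that is, `𝔭` is minimal over `(t)`, and Krull's principal ideal theorem applies.
-/

open TensorProduct

/-- A prime that is the ideal of denominators of an element `c ∉ B` of the fraction field has
height at most one: it is minimal over a principal ideal. -/
lemma height_le_one_of_denominator_ideal {B K : Type*} [CommRing B] [IsDomain B]
    [IsNoetherianRing B] [IsIntegrallyClosed B] [Field K] [Algebra B K] [IsFractionRing B K]
    (c : K) (hc : ¬ ∃ b : B, algebraMap B K b = c) (p : Ideal B) [p.IsPrime]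
    (hp : ∀ r : B, r ∈ p ↔ ∃ b : B, algebraMap B K b = r • c) : p.height ≤ 1 := by
  have hinj := IsFractionRing.injective B K
  obtain ⟨t, ht, u, hu, hup⟩ : ∃ t ∈ p, ∃ u : B, algebraMap B K u = t • c ∧ u ∉ p := by
    by_contra! hcon
    apply hc
    rw [← IsIntegrallyClosed.isIntegral_iff (R := B) (K := K)]
    refine isIntegral_of_smul_mem_submodule (Submodule.map (Algebra.linearMap B K) p) ?_
      ((IsNoetherian.noetherian p).map _) c ?_
    · obtain ⟨n, d, hd, hnd⟩ := IsFractionRing.div_surjective (A := B) c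
      have hd0 : algebraMap B K d ≠ 0 := by simpa using nonZeroDivisors.ne_zero hd
      have hdp : d ∈ p := (hp d).2 ⟨n, by rw [Algebra.smul_def, ← hnd]; field_simp⟩
      intro h
      have := (Submodule.eq_bot_iff _).1 h _ (Submodule.mem_map_of_mem hdp)
      exact hd0 this
    · rintro _ ⟨r, hr, rfl⟩
      obtain ⟨b, hb⟩ := (hp r).1 hr
      refine ⟨b, hcon r hr b hb, ?_⟩
      simp [hb, Algebra.smul_def, mul_comm]
  refine Ideal.height_le_one_of_isPrincipal_of_mem_minimalPrimes (Ideal.span {t}) p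
    ⟨⟨inferInstance, by simpa [Ideal.span_le] using ht⟩, ?_⟩
  rintro q ⟨hq, htq⟩ hqp r hr
  obtain ⟨b, hb⟩ := (hp r).1 hr
  have hru : r * u = t * b := by
    apply hinj
    simp only [map_mul, hu, hb, Algebra.smul_def]
    ring
  have : r * u ∈ q := hru ▸ q.mul_mem_right b (htq (Ideal.mem_span_singleton_self t))
  exact (hq.mem_or_mem this).resolve_right fun h => hup (hqp h)

/-- The case `M = B`: if `a ∉ B`, an associated prime of `K / B` containing the annihilator of the
class of `a` is an ideal of denominators containing `I`, so its height contradicts `hI`. -/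
lemma hartogs_extension_fractionField {B K : Type*} [CommRing B] [IsDomain B]
    [IsNoetherianRing B] [IsIntegrallyClosed B] [Field K] [Algebra B K] [IsFractionRing B K]
    (I : Ideal B) (hI : ∀ p : Ideal B, p.IsPrime → I ≤ p → ¬ p.height ≤ 1)
    (a : K) (ha : ∀ f ∈ I, f ≠ 0 → ∃ (m : ℕ) (b : B), algebraMap B K b = f ^ m • a) :
    ∃ b : B, algebraMap B K b = a := by
  by_contra hcon
  let N : Submodule B K := LinearMap.range (Algebra.linearMap B K)
  have hN (z : K) : N.mkQ z = 0 ↔ ∃ b : B, algebraMap B K b = z := by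
    simp [N]
  obtain ⟨p, hpass, hap⟩ :=
    exists_le_isAssociatedPrime_of_isNoetherianRing B (N.mkQ a) (by rwa [Ne, hN])
  obtain ⟨hp, z, hz⟩ := isAssociatedPrime_iff.1 hpass
  obtain ⟨c, rfl⟩ := N.mkQ_surjective z
  have hpc (r : B) : r ∈ p ↔ ∃ b : B, algebraMap B K b = r • c := by
    rw [hz, ← hN, map_smul, Submodule.mem_colon_singleton, Submodule.mem_bot]
  refine hI p hp (fun f hf => ?_) (height_le_one_of_denominator_ideal c (fun h => ?_) p hpc)
  · by_cases hf0 : f = 0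
    · simp [hf0]
    obtain ⟨m, hm⟩ := ha f hf hf0
    refine hp.mem_of_pow_mem m (hap ?_)
    rwa [Submodule.mem_colon_singleton, Submodule.mem_bot, ← map_smul, hN]
  · exact hp.ne_top ((Ideal.eq_top_iff_one p).2 ((hpc 1).2 (by simpa using h)))

/-- let `B` be a Noetherian integrally closed domain, `I` an ideal of
height at least `2`, and `M` a finitely generated free `B`-module.  If
`x ∈ M ⊗_B Frac B` satisfies that for every nonzero `f ∈ I` some power `f ^ m`
multiplies `x` into the image of `M`, then `x` lies in the image of `M` under the
canonical map `y ↦ y ⊗ 1`. -/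
theorem hartogs_extension_free_module (B : Type) [CommRing B] [IsDomain B]
    [IsNoetherianRing B] [IsIntegrallyClosed B] (I : Ideal B)
    (hht : ∀ 𝔭 : Ideal B, 𝔭.IsPrime → I ≤ 𝔭 →
      ∃ 𝔮₁ 𝔮₂ : Ideal B, 𝔮₁.IsPrime ∧ 𝔮₂.IsPrime ∧ 𝔮₁ < 𝔮₂ ∧ 𝔮₂ < 𝔭)
    (M : Type) [AddCommGroup M] [Module B M] [Module.Finite B M] [Module.Free B M]
    (x : M ⊗[B] FractionRing B)
    (hx : ∀ f ∈ I, f ≠ 0 → ∃ (m : ℕ) (y : M),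
      (f ^ m) • x = y ⊗ₜ[B] (1 : FractionRing B)) :
    ∃ y : M, x = y ⊗ₜ[B] (1 : FractionRing B) := by
  have hI (p : Ideal B) (hp : p.IsPrime) (hIp : I ≤ p) : ¬ p.height ≤ 1 := by
    obtain ⟨q₁, q₂, h₁, h₂, h₁₂, h₂p⟩ := hht p hp hIp
    intro hle
    have h := (Ideal.height_le_iff.1 hle) q₂ h₂ h₂p
    have h' := Ideal.height_strict_mono_of_isPrime_of_isPrime h₁₂
    rw [Order.lt_one_iff.1 h] at h'
    exact not_lt_bot h'
  let b := Module.Free.chooseBasis B M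
  let coord i : M ⊗[B] FractionRing B →ₗ[B] FractionRing B :=
    (TensorProduct.lid B (FractionRing B)).toLinearMap ∘ₗ (b.coord i).rTensor (FractionRing B)
  have hcoord i (y : M) (k : FractionRing B) : coord i (y ⊗ₜ k) = b.repr y i • k := by
    simp [coord]
  have hsum (z : M ⊗[B] FractionRing B) : z = ∑ i, b i ⊗ₜ[B] coord i z := by
    induction z with
    | zero => simp
    | add z w hz hw =>
      simp only [map_add, TensorProduct.tmul_add, Finset.sum_add_distrib, ← hz, ← hw]
    | tmul y k =>
      simp only [hcoord, ← TensorProduct.smul_tmul, ← TensorProduct.sum_tmul, b.sum_repr]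
  have hmem i : ∃ r : B, algebraMap B (FractionRing B) r = coord i x := by
    refine hartogs_extension_fractionField I hI _ fun f hf hf0 => ?_
    obtain ⟨m, y, hy⟩ := hx f hf hf0
    exact ⟨m, b.repr y i, by rw [← map_smul, hy, hcoord, Algebra.algebraMap_eq_smul_one]⟩
  choose r hr using hmem
  refine ⟨∑ i, r i • b i, ?_⟩
  rw [hsum x, TensorProduct.sum_tmul]
  refine Finset.sum_congr rfl fun i _ => ?_
  rw [← hr, TensorProduct.smul_tmul, Algebra.algebraMap_eq_smul_one]
end

section
/- Let K be a field, let ι₁ and ι₂ be finite index sets, and write S = MvPolynomial (ι₁ ⊕ ι₂) K, graded by total degree. Let r : S → MvPolynomial ι₁ K be the K-algebra homomorphism fixing the variables indexed by ι₁ and sending the variables indexed by ι₂ to 0. Let A be a K-subalgebra of S that is graded (i.e., closed under taking homogeneous components), and suppose that r restricted to A is injective with image B ⊆ MvPolynomial ι₁ K, and that MvPolynomial ι₁ K is a free module over B. Then S is a free module over the K-subalgebra R of S generated by A together with all the variables indexed by ι₂; consequently S is also a free module over A. -/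
/-!
Write `H = K[Xᵢ : i ∈ ι₁]`, `S = K[Xᵢ : i ∈ ι₁ ⊕ ι₂]`, `B = r(A)`, and write `y` for the
`ι₂`-variables. Choose monomials `x^u` of `H` whose classes form a `K`-basis of `H / B₊H`, where
`B₊` is the set of elements of `B` without constant term. The same monomials, viewed in `S`, form
a basis of `S` over `R = A[y]`:

* They span by graded Nakayama (`graded_nakayama`): `r` induces `S / (A₊, y) ≅ H / B₊H`, so every
  polynomial is a `K`-combination of the `x^u` modulo the ideal `(A₊, y)`, and since `A` is graded
  one can induct on the degree.
* They are linearly independent over `B`: freeness of `H` provides `B`-linear forms on `H` whose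
  matrix on the chosen monomials reduces to the identity modulo `B₊`, hence has nonzero
  determinant (`linearIndependent_of_reduction`).
* A relation over `A[y]` is killed coefficient by coefficient in `y`: at a minimal exponent the
  coefficients of the relation restrict under `r` to a `B`-linear relation in `H`, which is trivial,
  and `r` is injective on `A` (`eq_zero_of_sum_eq_zero`).

The last point works with coefficients in the abstract polynomial ring `A[Yᵢ : i ∈ ι₂]` acting on
`S`, so `S` is also free over that ring, which is itself free over `A`; this gives freeness over
`A`.
-/

namespace KostantFreeness

open MvPolynomial

variable {K : Type} [Field K]

/-- If `H` is a free module over a subalgebra `B` with augmentation `ε : B → K`, then a family in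
the domain `H` that is `K`-linearly independent modulo the extension to `H` of the ideal `ker ε`
is linearly independent over `B`. -/
lemma linearIndependent_of_reduction {H κ : Type} [CommRing H] [IsDomain H] [Algebra K H]
    (B : Subalgebra K H) [Module.Free B H] (ε : B →ₐ[K] K) (v : κ → H)
    (hv : LinearIndependent K fun j =>
      Ideal.Quotient.mkₐ K (Ideal.span {h : H | ∃ b : B, ε b = 0 ∧ (b : H) = h}) (v j)) :
    LinearIndependent B v := by
  classical
  set J := Ideal.span {h : H | ∃ b : B, ε b = 0 ∧ (b : H) = h} with hJ
  set e := Module.Free.chooseBasis B H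
  -- `ψ` reduces the coordinates of an element modulo `ker ε`; its kernel is `(ker ε) H`.
  let ψ : H →ₗ[K] (Module.Free.ChooseBasisIndex B H →₀ K) :=
    (Finsupp.mapRange.linearMap ε.toLinearMap) ∘ₗ (e.repr.toLinearMap.restrictScalars K)
  have ψ_apply (h : H) (α) : ψ h α = ε (e.repr h α) := rfl
  have hker (h : H) (hh : ψ h = 0) : h ∈ J := by
    rw [← e.linearCombination_repr h, Finsupp.linearCombination_apply]
    refine Submodule.sum_mem _ fun α _ => ?_
    change e.repr h α • e α ∈ J
    rw [Algebra.smul_def]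
    refine Ideal.mul_mem_right _ _ (Ideal.subset_span ⟨e.repr h α, ?_, rfl⟩)
    rw [← ψ_apply, hh]; rfl
  have hψ : LinearIndependent K (ψ ∘ v) := by
    rw [linearIndependent_iff'] at hv ⊢
    intro s g hg
    refine hv s g ?_
    simp only [← map_smul, ← map_sum, Function.comp_apply] at hg ⊢
    exact Ideal.Quotient.eq_zero_iff_mem.2 (hker _ hg)
  -- `L` supplies coordinate forms dual to the independent family `ψ ∘ v`; `Φ i` lifts the `i`-th
  -- of them to a `B`-linear form on `H`.
  obtain ⟨L, hL⟩ := LinearMap.exists_leftInverse_of_injective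
    (Finsupp.linearCombination K (ψ ∘ v)) (LinearMap.ker_eq_bot.2 hψ)
  have hLv (j : κ) : L (ψ (v j)) = Finsupp.single j 1 := by
    have := LinearMap.congr_fun hL (Finsupp.single j 1)
    simpa using this
  let Φ (i : κ) : H →ₗ[B] B :=
    e.constr B fun α => algebraMap K B (L (Finsupp.single α 1) i)
  have hΦ (i : κ) (h : H) : ε (Φ i h) = L (ψ h) i := by
    have h1 : Φ i h = (e.repr h).sum fun α b => b • algebraMap K B (L (Finsupp.single α 1) i) := by
      simp [Φ, Module.Basis.constr_apply]
    have h2 : ψ h = ∑ α ∈ (e.repr h).support, ε (e.repr h α) • Finsupp.single α (1 : K) := by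
      ext α
      rw [ψ_apply, Finsupp.finsetSum_apply]
      simp [Finsupp.single_apply]
      intro h; simp [h]
    rw [h1, h2, Finsupp.sum, map_sum, map_sum, Finsupp.finsetSum_apply]
    refine Finset.sum_congr rfl fun α _ => ?_
    rw [L.map_smul, smul_eq_mul, map_mul, AlgHom.commutes, Algebra.algebraMap_self_apply,
      Finsupp.smul_apply, smul_eq_mul]
  rw [linearIndependent_iff']
  intro s g hg
  -- `M` reduces to the identity under `ε`, and annihilates the vector of coefficients `g`.
  let M : Matrix s s B := fun i j => Φ i (v j)
  have hdet : M.det ≠ 0 := by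
    intro h0
    have hone : ε.mapMatrix M = 1 := by
      ext i j
      change ε (Φ i (v j)) = _
      rw [hΦ, hLv, Matrix.one_apply, Finsupp.single_apply]
      exact if_congr (by rw [Subtype.ext_iff, eq_comm]) rfl rfl
    have h1 : ε M.det = 1 := by rw [AlgHom.map_det, hone, Matrix.det_one]
    rw [h0, map_zero] at h1
    exact zero_ne_one h1
  have hM : M.mulVec (fun j => g j) = 0 := by
    ext1 i
    have := congrArg (Φ i) hg
    rw [map_sum, ← Finset.sum_coe_sort, map_zero] at this
    simp only [map_smul, smul_eq_mul] at this
    simpa [Matrix.mulVec, dotProduct, M, mul_comm] using this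
  intro i hi
  exact congrFun (Matrix.eq_zero_of_mulVec_eq_zero hdet hM) ⟨i, hi⟩

/-- Graded Nakayama: let `G` consist of polynomials without constant term, and let `T` be stable
under multiplication by the homogeneous components of elements of `G`. If `T` contains certain
monomials which span everything over `K` modulo the ideal generated by `G`, then `T` is
everything. -/
lemma graded_nakayama {σ κ : Type} (G : Set (MvPolynomial σ K))
    (hG0 : ∀ g ∈ G, constantCoeff g = 0) (u : κ → σ →₀ ℕ)
    (T : Submodule K (MvPolynomial σ K))
    (hT : ∀ g ∈ G, ∀ d, ∀ t ∈ T, homogeneousComponent d g * t ∈ T)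
    (hu : ∀ j, monomial (u j) 1 ∈ T)
    (hspan : ∀ f, ∃ t ∈ Submodule.span K (Set.range fun j => (monomial (u j) 1 : MvPolynomial σ K)),
      f - t ∈ Ideal.span G) : T = ⊤ := by
  have key : ∀ d (f : MvPolynomial σ K), f.IsHomogeneous d → f ∈ T := by
    intro d
    induction d using Nat.strong_induction_on with
    | _ d ih =>
    intro f hf
    obtain ⟨t, ht, hj⟩ := hspan f
    have h1 : homogeneousComponent d t ∈ T := by
      clear hj
      induction ht using Submodule.span_induction with
      | mem x hx =>
        obtain ⟨j, rfl⟩ := hx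
        rw [homogeneousComponent_of_mem (isHomogeneous_monomial (n := (u j).degree) 1 rfl)]
        split_ifs
        · exact hu j
        · exact T.zero_mem
      | zero => simp
      | add x y _ _ hx hy => rw [map_add]; exact T.add_mem hx hy
      | smul a x _ hx => rw [map_smul]; exact T.smul_mem _ hx
    have h2 : ∀ j ∈ Ideal.span G, homogeneousComponent d j ∈ T := by
      intro j hj
      suffices ∀ s, homogeneousComponent d (s * j) ∈ T by simpa using this 1
      induction hj using Submodule.span_induction with
      | zero => simp
      | add x y _ _ hx hy =>
        intro s; rw [mul_add, map_add]; exact T.add_mem (hx s) (hy s)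
      | smul a x _ hx => intro s; rw [smul_eq_mul, ← mul_assoc]; exact hx _
      | mem g hg =>
        intro s
        rw [← sum_homogeneousComponent g, ← sum_homogeneousComponent s, Finset.sum_mul_sum,
          map_sum]
        refine T.sum_mem fun k _ => ?_
        rw [map_sum]
        refine T.sum_mem fun i _ => ?_
        rw [homogeneousComponent_of_mem ((homogeneousComponent_isHomogeneous k s).mul
          (homogeneousComponent_isHomogeneous i g))]
        split_ifs with hd
        -- The degree-zero part of `g` vanishes, so the cofactor of a nonzero term has degree `< d`.
        · rcases Nat.eq_zero_or_pos i with rfl | hi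
          · have : coeff 0 g = 0 := hG0 g hg
            simp [homogeneousComponent_zero, this]
          · rw [mul_comm]
            exact hT g hg _ _ (ih k (by omega) _ (homogeneousComponent_isHomogeneous k s))
        · exact T.zero_mem
    have h3 : f = homogeneousComponent d t + homogeneousComponent d (f - t) := by
      rw [← map_add, add_sub_cancel, homogeneousComponent_of_mem hf, if_pos rfl]
    rw [h3]
    exact T.add_mem h1 (h2 _ hj)
  refine eq_top_iff.2 fun f _ => ?_
  rw [← sum_homogeneousComponent f]
  exact T.sum_mem fun d _ => key d _ (homogeneousComponent_isHomogeneous d f)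

variable {ι₁ ι₂ : Type}

/-- The restriction map `S → H`, fixing the `ι₁`-variables and killing the `ι₂`-variables. -/
noncomputable abbrev restr : MvPolynomial (ι₁ ⊕ ι₂) K →ₐ[K] MvPolynomial ι₁ K :=
  aeval (Sum.elim X fun _ => 0)

/-- The map `S → H[Yᵢ : i ∈ ι₂]` that regards a polynomial as a polynomial in the `ι₂`-variables
with coefficients in `H`. -/
noncomputable def iterated :
    MvPolynomial (ι₁ ⊕ ι₂) K →ₐ[K] MvPolynomial ι₂ (MvPolynomial ι₁ K) :=
  aeval (Sum.elim (fun i => C (X i)) X)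

/-- The evaluation `A[Yᵢ : i ∈ ι₂] → S` sending `Yᵢ` to the variable `X (inr i)`. -/
noncomputable def adjoinVars (A : Subalgebra K (MvPolynomial (ι₁ ⊕ ι₂) K)) :
    MvPolynomial ι₂ A →ₐ[A] MvPolynomial (ι₁ ⊕ ι₂) K :=
  aeval fun i => X (Sum.inr i)

lemma iterated_rename (h : MvPolynomial ι₁ K) :
    iterated (ι₂ := ι₂) (rename Sum.inl h) = C h := by
  have : (iterated (K := K) (ι₁ := ι₁) (ι₂ := ι₂)).comp (rename Sum.inl)
      = (IsScalarTower.toAlgHom K (MvPolynomial ι₁ K) (MvPolynomial ι₂ (MvPolynomial ι₁ K))) := by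
    ext1 i
    simp [iterated, algebraMap_eq]
  exact DFunLike.congr_fun this h

lemma coeff_zero_iterated (f : MvPolynomial (ι₁ ⊕ ι₂) K) :
    coeff 0 (iterated f) = restr f := by
  have : ((aeval (fun _ : ι₂ => (0 : MvPolynomial ι₁ K))).restrictScalars K).comp
      (iterated (K := K) (ι₁ := ι₁) (ι₂ := ι₂)) = restr := by
    ext1 i
    cases i <;> simp [iterated]
  rw [← this]
  simp [constantCoeff_eq]

lemma iterated_adjoinVars (A : Subalgebra K (MvPolynomial (ι₁ ⊕ ι₂) K)) (P : MvPolynomial ι₂ A) :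
    iterated (adjoinVars A P) =
      ∑ m ∈ P.support, iterated (coeff m P : A).1 * monomial m 1 := by
  rw [adjoinVars, aeval_def, eval₂_eq, map_sum]
  refine Finset.sum_congr rfl fun m _ => ?_
  rw [map_mul, map_prod, monomial_eq, Finsupp.prod]
  simp [iterated]

/-- If `P ∈ A[Y]` has no terms at exponents below `m`, then the `y^m`-coefficient of its image in
`H[Y]` is the restriction of its own `m`-th coefficient: the `y`-dependence of the coefficients
of `P` only contributes to higher exponents. -/
lemma coeff_iterated_adjoinVars (A : Subalgebra K (MvPolynomial (ι₁ ⊕ ι₂) K))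
    (P : MvPolynomial ι₂ A) (m : ι₂ →₀ ℕ) (hP : ∀ m' < m, P.coeff m' = 0) :
    coeff m (iterated (adjoinVars A P)) = restr (coeff m P : A).1 := by
  rw [iterated_adjoinVars, coeff_sum, Finset.sum_eq_single m]
  · rw [coeff_mul_monomial', if_pos le_rfl, tsub_self, coeff_zero_iterated, mul_one]
  · intro m' hm' hne
    rw [coeff_mul_monomial', if_neg]
    exact fun hle => (mem_support_iff.1 hm') (hP m' (lt_of_le_of_ne hle hne))
  · intro hm
    simp [notMem_support_iff.1 hm]

/-- A family in `H` that is linearly independent over `B = r(A)` satisfies, as a family in `S`, no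
nontrivial relation with coefficients in `A[Y]`. -/
lemma eq_zero_of_sum_eq_zero {κ : Type} (A : Subalgebra K (MvPolynomial (ι₁ ⊕ ι₂) K))
    (hinj : Set.InjOn restr (A : Set (MvPolynomial (ι₁ ⊕ ι₂) K)))
    (v : κ → MvPolynomial ι₁ K) (hv : LinearIndependent (A.map restr) v)
    (P : κ → MvPolynomial ι₂ A) (s : Finset κ)
    (h : ∑ j ∈ s, adjoinVars A (P j) * rename Sum.inl (v j) = 0) :
    ∀ j ∈ s, P j = 0 := by
  suffices ∀ m, ∀ j ∈ s, (P j).coeff m = 0 from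
    fun j hj => MvPolynomial.ext _ _ fun m => this m j hj
  intro m
  induction m using WellFoundedLT.induction with
  | _ m ih =>
  have h1 := congrArg (fun f => coeff m (iterated f)) h
  simp only [map_sum, map_mul, iterated_rename, coeff_sum, mul_comm _ (C _), coeff_C_mul, map_zero,
    coeff_zero] at h1
  rw [linearIndependent_iff'] at hv
  have h2 := hv s (fun j => ⟨restr (coeff m (P j) : A).1,
    _, ((P j).coeff m).2, rfl⟩) (by
      rw [← h1]
      refine Finset.sum_congr rfl fun j hj => ?_
      rw [coeff_iterated_adjoinVars A (P j) m fun m' hm' => ih m' hm' j hj]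
      exact mul_comm _ _)
  intro j hj
  apply Subtype.ext
  refine hinj ((P j).coeff m).2 A.zero_mem ?_
  exact (congrArg Subtype.val (h2 j hj)).trans (map_zero restr).symm

/-- The image of `A[Y]` in `S` contains the subalgebra `R` generated by `A` and the
`ι₂`-variables. -/
lemma exists_adjoinVars_eq (A : Subalgebra K (MvPolynomial (ι₁ ⊕ ι₂) K))
    (f : MvPolynomial (ι₁ ⊕ ι₂) K)
    (hf : f ∈ Algebra.adjoin K ((A : Set (MvPolynomial (ι₁ ⊕ ι₂) K)) ∪
          Set.range fun i : ι₂ => X (Sum.inr i))) :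
    ∃ P, adjoinVars A P = f := by
  suffices Algebra.adjoin K ((A : Set (MvPolynomial (ι₁ ⊕ ι₂) K)) ∪
      Set.range fun i : ι₂ => X (Sum.inr i)) ≤ ((adjoinVars A).restrictScalars K).range from this hf
  refine Algebra.adjoin_le ?_
  rintro x (hx | ⟨i, rfl⟩)
  · exact ⟨C ⟨x, hx⟩, by simp [adjoinVars]⟩
  · exact ⟨X i, by simp [adjoinVars]⟩

/-- Some monomials in the `ι₁`-variables are linearly independent over `B = r(A)` and span `S` over
`K` modulo the ideal `(A₊, y)`. They are chosen to form a `K`-basis of `H / B₊H`. -/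
lemma exists_monomials (A : Subalgebra K (MvPolynomial (ι₁ ⊕ ι₂) K))
    (hfree : Module.Free (A.map restr) (MvPolynomial ι₁ K)) :
    ∃ (κ : Type) (u : κ → ι₁ →₀ ℕ),
      LinearIndependent (A.map restr) (fun j => (monomial (u j) 1 : MvPolynomial ι₁ K)) ∧
      ∀ f, ∃ t ∈ Submodule.span K (Set.range fun j =>
          (monomial ((u j).mapDomain Sum.inl) 1 : MvPolynomial (ι₁ ⊕ ι₂) K)),
        f - t ∈ Ideal.span ({a | a ∈ A ∧ constantCoeff a = 0} ∪
          Set.range fun i : ι₂ => X (Sum.inr i)) := by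
  set G : Set (MvPolynomial (ι₁ ⊕ ι₂) K) := {a | a ∈ A ∧ constantCoeff a = 0} ∪
          Set.range fun i : ι₂ => X (Sum.inr i) with hG
  let ε : A.map restr →ₐ[K] K := (aeval fun _ => 0).comp (A.map restr).val
  let J := Ideal.span {h : MvPolynomial ι₁ K | ∃ b : A.map restr, ε b = 0 ∧ b = h}
  obtain ⟨κ, u, -, hspan, hind⟩ := exists_linearIndependent' K fun m : ι₁ →₀ ℕ =>
    Ideal.Quotient.mkₐ K J (monomial m 1)
  refine ⟨κ, u, linearIndependent_of_reduction _ ε _ hind, ?_⟩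
  -- `f` and its restriction agree modulo the `ι₂`-variables.
  have hres (f : MvPolynomial (ι₁ ⊕ ι₂) K) : f - rename Sum.inl (restr f) ∈ Ideal.span G := by
    have : (Ideal.Quotient.mkₐ K (Ideal.span G)).comp ((rename Sum.inl).comp restr)
        = Ideal.Quotient.mkₐ K (Ideal.span G) := by
      ext1 i
      cases i with
      | inl i => simp
      | inr i =>
        simp only [AlgHom.comp_apply, aeval_X, Sum.elim_inr, map_zero]
        have hi : X (Sum.inr i) ∈ Ideal.span G := Ideal.subset_span (Or.inr ⟨i, rfl⟩)
        exact (Ideal.Quotient.eq_zero_iff_mem.2 hi).symm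
    exact Ideal.Quotient.eq.1 (DFunLike.congr_fun this f).symm
  -- `B₊H` is carried into `(A₊, y)` by the inclusion `H → S`.
  have hJ : J ≤ (Ideal.span G).comap (rename Sum.inl) := by
    refine Ideal.span_le.2 ?_
    rintro _ ⟨⟨_, a, ha, rfl⟩, hb, rfl⟩
    have hc : constantCoeff a = 0 := by
      have : ((aeval fun _ => (0 : K)).comp restr : MvPolynomial (ι₁ ⊕ ι₂) K →ₐ[K] K)
          = aeval fun _ => 0 := by
        ext1 i
        cases i <;> simp
      have := DFunLike.congr_fun this a
      rw [show ((aeval fun _ => (0 : K)).comp restr : MvPolynomial (ι₁ ⊕ ι₂) K →ₐ[K] K) a = 0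
        from hb] at this
      simpa using this.symm
    have := Ideal.sub_mem _ (Ideal.subset_span (Or.inl ⟨ha, hc⟩) : a ∈ Ideal.span G) (hres a)
    simpa using this
  intro f
  have htop : Ideal.Quotient.mkₐ K J (restr f) ∈ Submodule.span K
      (Set.range ((fun m : ι₁ →₀ ℕ => Ideal.Quotient.mkₐ K J (monomial m 1)) ∘ u)) := by
    rw [hspan, (restr f).as_sum, map_sum]
    refine Submodule.sum_mem _ fun m _ => ?_
    rw [← mul_one (coeff m _), ← smul_eq_mul, ← smul_monomial, map_smul]
    exact Submodule.smul_mem _ _ (Submodule.subset_span ⟨m, rfl⟩)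
  have hr : Set.range ((fun m : ι₁ →₀ ℕ => Ideal.Quotient.mkₐ K J (monomial m 1)) ∘ u)
      = (Ideal.Quotient.mkₐ K J).toLinearMap '' Set.range fun j => monomial (u j) 1 := by
    rw [← Set.range_comp]; rfl
  rw [hr, Submodule.span_image] at htop
  obtain ⟨t, ht, hft⟩ := htop
  refine ⟨rename Sum.inl t, ?_, ?_⟩
  · have := Submodule.mem_map_of_mem (f := (rename Sum.inl :
      MvPolynomial ι₁ K →ₐ[K] MvPolynomial (ι₁ ⊕ ι₂) K).toLinearMap) ht
    rw [Submodule.map_span, ← Set.range_comp] at this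
    have hcomp : ((rename Sum.inl : MvPolynomial ι₁ K →ₐ[K] MvPolynomial (ι₁ ⊕ ι₂) K).toLinearMap ∘
        fun j => monomial (u j) (1 : K)) = fun j => monomial ((u j).mapDomain Sum.inl) 1 :=
      funext fun j => rename_monomial _ _ _
    rwa [hcomp] at this
  · have h1 : restr f - t ∈ J := Ideal.Quotient.eq.1 hft.symm
    have h2 := hJ h1
    rw [Ideal.mem_comap, map_sub] at h2
    simpa using Ideal.add_mem _ (hres f) h2

end KostantFreeness

/-- abstract Kostant freeness: let `S = K[Xᵢ : i ∈ ι₁ ⊕ ι₂]`, let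
`r : S → K[Xᵢ : i ∈ ι₁]` fix the `ι₁`-variables and kill the `ι₂`-variables, and let
`A ⊆ S` be a graded `K`-subalgebra (closed under homogeneous components) on which `r`
is injective with image `B = A.map r`, such that `K[Xᵢ : i ∈ ι₁]` is a free
`B`-module.  Then `S` is free over the subalgebra `R` generated by `A` and the
`ι₂`-variables, and `S` is free over `A`. -/
theorem kostant_freeness (K : Type) [Field K] (ι₁ ι₂ : Type) [Finite ι₁] [Finite ι₂]
    (r : MvPolynomial (ι₁ ⊕ ι₂) K →ₐ[K] MvPolynomial ι₁ K)
    (hr : r = MvPolynomial.aeval (Sum.elim MvPolynomial.X fun _ => 0))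
    (A : Subalgebra K (MvPolynomial (ι₁ ⊕ ι₂) K))
    (hgraded : ∀ f ∈ A, ∀ d : ℕ, MvPolynomial.homogeneousComponent d f ∈ A)
    (hinj : Set.InjOn r (A : Set (MvPolynomial (ι₁ ⊕ ι₂) K)))
    (hfree : Module.Free (A.map r) (MvPolynomial ι₁ K)) :
    Module.Free
        (Algebra.adjoin K ((A : Set (MvPolynomial (ι₁ ⊕ ι₂) K)) ∪
          Set.range fun i : ι₂ => MvPolynomial.X (Sum.inr i)))
        (MvPolynomial (ι₁ ⊕ ι₂) K) ∧
    Module.Free A (MvPolynomial (ι₁ ⊕ ι₂) K) := by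
  open KostantFreeness MvPolynomial in
  subst hr
  obtain ⟨κ, u, hind, hspan⟩ := exists_monomials A hfree
  let w : κ → MvPolynomial (ι₁ ⊕ ι₂) K := fun j => monomial ((u j).mapDomain Sum.inl) 1
  have hw (j : κ) : w j = rename Sum.inl (monomial (u j) (1 : K)) := by
    simp [w, rename_monomial]
  -- Both spanning claims below are instances of this one.
  have htop (T : Submodule K (MvPolynomial (ι₁ ⊕ ι₂) K)) (hA : ∀ a ∈ A, ∀ t ∈ T, a * t ∈ T)
      (hX : ∀ i, ∀ t ∈ T, X (Sum.inr i) * t ∈ T) (hT : ∀ j, w j ∈ T) : T = ⊤ := by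
    refine graded_nakayama _ ?_ _ T ?_ hT hspan
    · rintro _ (h | ⟨i, rfl⟩)
      · exact h.2
      · simp
    · rintro _ (h | ⟨i, rfl⟩) d t ht
      · exact hA _ (hgraded _ h.1 d) t ht
      · dsimp only
        rw [homogeneousComponent_of_mem (isHomogeneous_X K (Sum.inr i))]
        split_ifs
        · exact hX i t ht
        · simp
  constructor
  · set R := Algebra.adjoin K ((A : Set (MvPolynomial (ι₁ ⊕ ι₂) K)) ∪
          Set.range fun i : ι₂ => MvPolynomial.X (Sum.inr i)) with hR
    refine Module.Free.of_basis (Module.Basis.mk (v := w) ?_ ?_)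
    · rw [linearIndependent_iff']
      intro s g hg j hj
      choose P hP using fun j => exists_adjoinVars_eq A (g j) (g j).2
      have := eq_zero_of_sum_eq_zero A hinj _ hind P s
        (by simpa [hP, ← hw, Subalgebra.smul_def] using hg) j hj
      apply Subtype.ext
      rw [← hP, this, map_zero]; rfl
    · have := htop ((Submodule.span R (Set.range w)).restrictScalars K)
        (fun a ha t ht => Submodule.smul_mem _
          (⟨a, Algebra.subset_adjoin (Or.inl ha)⟩ : R) ht)
        (fun i t ht => Submodule.smul_mem _
          (⟨_, Algebra.subset_adjoin (Or.inr ⟨i, rfl⟩)⟩ : R) ht)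
        (fun j => Submodule.subset_span ⟨j, rfl⟩)
      exact fun f _ => (this.ge trivial :)
  · let : Algebra (MvPolynomial ι₂ A) (MvPolynomial (ι₁ ⊕ ι₂) K) := (adjoinVars A).toAlgebra
    have hsmul (P : MvPolynomial ι₂ A) (f : MvPolynomial (ι₁ ⊕ ι₂) K) :
      P • f = adjoinVars A P * f := rfl
    have : IsScalarTower A (MvPolynomial ι₂ A) (MvPolynomial (ι₁ ⊕ ι₂) K) :=
      IsScalarTower.of_algHom (adjoinVars A)
    have : IsScalarTower K (MvPolynomial ι₂ A) (MvPolynomial (ι₁ ⊕ ι₂) K) :=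
      IsScalarTower.of_algHom ((adjoinVars A).restrictScalars K)
    have : Module.Free (MvPolynomial ι₂ A) (MvPolynomial (ι₁ ⊕ ι₂) K) := by
      refine Module.Free.of_basis (Module.Basis.mk (v := w) ?_ ?_)
      · refine (linearIndependent_iff' (R := MvPolynomial ι₂ A) (v := w)).2 fun s g hg j hj => ?_
        exact eq_zero_of_sum_eq_zero A hinj _ hind g s
          (by simpa [hsmul, ← hw] using hg) j hj
      · have := htop ((Submodule.span (MvPolynomial ι₂ A) (Set.range w)).restrictScalars K)
          (fun a ha t ht => by
            have := Submodule.smul_mem _ (C ⟨a, ha⟩ : MvPolynomial ι₂ A) ht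
            simpa [hsmul, adjoinVars, Subalgebra.algebraMap_def] using this)
          (fun i t ht => by
            have := Submodule.smul_mem _ (X i : MvPolynomial ι₂ A) ht
            simpa [hsmul, adjoinVars] using this)
          (fun j => Submodule.subset_span ⟨j, rfl⟩)
        exact fun f _ => (this.ge trivial :)
    exact Module.Free.trans (S := MvPolynomial ι₂ A)
end

section
/- Let k be a field, n ≥ 2, and let y be a nonzero nilpotent n×n matrix over k. Then the centralizer Z(y) = {x ∈ Matrix n n k : x·y = y·x}, which is a k-linear subspace of the n² -dimensional space of n×n matrices, has dimension at most n² − 2n + 2. (Equivalently, the conjugation orbit of a nonzero nilpotent matrix has dimension at least 2(n−1) = 2r, where r = n−1 is half the minimal dimension of a nonzero nilpotent coadjoint orbit in type A_{n−1}; this is the type A case of the bound ½ dim G·y ≥ r for nonzero nilpotent y.) -/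
/-!
Work with `f : V → V` nilpotent and nonzero, `dim V = n`. A nonzero nilpotent map is not scalar, so
there are `v` with `v, f v` independent and, dually, a functional `φ` with `φ, φ ∘ f` independent.
Let `U = span {v, f v}` and `W = ker φ ∩ ker (φ ∘ f)`, the latter of dimension `n - 2`. Filter the
centralizer `S` of `f` as follows.

* The image of `x ↦ x v` on `S` has dimension at most `n`. If `x v = 0`, then `x (f v) = f (x v) = 0`
  too, so `x` kills `U`.
* On that kernel, `φ ∘ x` annihilates `U`, so `x ↦ φ ∘ x` has image of dimension at most `n - 2`.
  If `φ ∘ x = 0`, then also `φ ∘ f ∘ x = φ ∘ x ∘ f = 0`, so `x` takes values in `W`.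
* What remains consists of maps factoring as `V → V / U → W → V`, a space of dimension at most
  `(n - 2) ^ 2`.

Hence `dim S ≤ n + (n - 2) + (n - 2) ^ 2 = n ^ 2 - 2 n + 2`.
-/

open Module

lemma exists_linearIndependent_of_isNilpotent {k V : Type*} [Field k] [AddCommGroup V] [Module k V]
    (f : End k V) (hf : IsNilpotent f) (hf0 : f ≠ 0) :
    ∃ v, LinearIndependent k ![v, f v] := by
  obtain ⟨v, hv⟩ : ∃ v, f v ≠ 0 := by
    by_contra! h
    exact hf0 (LinearMap.ext h)
  have hv0 : v ≠ 0 := by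
    rintro rfl
    simp at hv
  refine ⟨v, (LinearIndependent.pair_iff' hv0).2 fun c hc => ?_⟩
  obtain ⟨N, hN⟩ := hf
  have hpow : ∀ m : ℕ, (f ^ m) v = c ^ m • v := by
    intro m
    induction m with
    | zero => simp
    | succ m ih => rw [pow_succ', Module.End.mul_apply, ih, map_smul, ← hc, smul_smul, pow_succ]
  have h := hpow N
  rw [hN, LinearMap.zero_apply, eq_comm, smul_eq_zero] at h
  have hc0 : c = 0 := eq_zero_of_pow_eq_zero (h.resolve_right hv0)
  rw [hc0, zero_smul] at hc
  exact hv hc.symm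

/-- Rank-nullity for the restriction of `g` to `S`, with the image bounded by `T`: one step of the
filtration of the centralizer. -/
lemma finrank_le_add_finrank_inf_ker {k A B : Type*} [Field k] [AddCommGroup A] [Module k A]
    [FiniteDimensional k A] [AddCommGroup B] [Module k B] [FiniteDimensional k B]
    (S : Submodule k A) (g : A →ₗ[k] B) (T : Submodule k B) (hT : S.map g ≤ T) :
    finrank k S ≤ finrank k T + finrank k ↥(S ⊓ LinearMap.ker g) := by
  have h := LinearMap.finrank_range_add_finrank_ker (g.domRestrict S)
  have h1 : finrank k (LinearMap.range (g.domRestrict S)) ≤ finrank k T := by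
    apply Submodule.finrank_mono
    rw [LinearMap.range_domRestrict]
    exact hT
  have h2 : finrank k (LinearMap.ker (g.domRestrict S)) ≤ finrank k ↥(S ⊓ LinearMap.ker g) := by
    rw [← Submodule.finrank_map_subtype_eq S, LinearMap.ker_domRestrict]
    exact (congrArg (fun P : Submodule k A => finrank k P) (Submodule.map_comap_subtype S _)).le
  omega

lemma finrank_centralizer_le {k V : Type*} [Field k] [AddCommGroup V] [Module k V]
    [FiniteDimensional k V] (f : End k V) (hf : IsNilpotent f) (hf0 : f ≠ 0)
    (S : Submodule k (End k V)) (hS : ∀ x ∈ S, x * f = f * x) :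
    finrank k S ≤ finrank k V + ((finrank k V - 2) + (finrank k V - 2) * (finrank k V - 2)) := by
  obtain ⟨v, hv⟩ := exists_linearIndependent_of_isNilpotent f hf hf0
  obtain ⟨φ, hφ⟩ : ∃ φ : Dual k V, LinearIndependent k ![φ, f.dualMap φ] := by
    refine exists_linearIndependent_of_isNilpotent (V := Dual k V) f.dualMap ?_ ?_
    · obtain ⟨N, hN⟩ := hf
      have hpow : ∀ m : ℕ, (f.dualMap : End k (Dual k V)) ^ m = (f ^ m).dualMap := by
        intro m
        induction m with
        | zero => rfl
        | succ m ih => rw [pow_succ, ih, pow_succ']; rfl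
      refine ⟨N, ?_⟩
      rw [hpow, hN]
      ext
      simp
    · intro h
      refine hf0 (LinearMap.ext fun x => ?_)
      refine (Module.forall_dual_apply_eq_zero_iff k _).1 fun ψ => ?_
      exact LinearMap.congr_fun (LinearMap.congr_fun h ψ) x
  set U : Submodule k V := Submodule.span k (Set.range ![v, f v]) with hU
  set Φ : Submodule k (Dual k V) := Submodule.span k (Set.range ![φ, f.dualMap φ]) with hΦ
  have hU2 : finrank k U = 2 := by simpa using finrank_span_eq_card hv
  have hΦ2 : finrank k Φ = 2 := by simpa using finrank_span_eq_card hφ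
  have hQ : finrank k (V ⧸ U) = finrank k V - 2 := by
    have := U.finrank_quotient_add_finrank
    omega
  have hA : finrank k U.dualAnnihilator = finrank k V - 2 := by
    have := Subspace.finrank_add_finrank_dualAnnihilator_eq U
    omega
  have hW : finrank k Φ.dualCoannihilator = finrank k V - 2 := by
    have := Subspace.finrank_add_finrank_dualCoannihilator_eq Φ
    omega
  have hkill : ∀ x ∈ S, x v = 0 → U ≤ LinearMap.ker x := by
    intro x hx hxv
    rw [hU, Submodule.span_le]
    rintro _ ⟨i, rfl⟩
    fin_cases i
    · exact hxv
    · have := LinearMap.congr_fun (hS x hx) v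
      simpa [hxv] using this
  let ev : End k V →ₗ[k] V := LinearMap.applyₗ v
  let post : End k V →ₗ[k] Dual k V := LinearMap.llcomp k V V k φ
  have h1 := finrank_le_add_finrank_inf_ker S ev ⊤ le_top
  have h2 := finrank_le_add_finrank_inf_ker (S ⊓ LinearMap.ker ev) post U.dualAnnihilator (by
    rintro _ ⟨x, ⟨hx, hxv⟩, rfl⟩
    rw [Submodule.mem_dualAnnihilator]
    intro u hu
    have : x u = 0 := hkill x hx hxv hu
    change φ (x u) = 0
    rw [this, map_zero])
  -- The endomorphisms factoring as `V → V / U → W → V` are the range of this map.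
  let extend : ((V ⧸ U) →ₗ[k] Φ.dualCoannihilator) →ₗ[k] End k V :=
    (LinearMap.llcomp k V Φ.dualCoannihilator V Φ.dualCoannihilator.subtype) ∘ₗ
      (LinearMap.lcomp k Φ.dualCoannihilator U.mkQ)
  have h3 : S ⊓ LinearMap.ker ev ⊓ LinearMap.ker post ≤ LinearMap.range extend := by
    rintro x ⟨⟨hx, hxv⟩, hxφ⟩
    have hφx : ∀ w, φ (x w) = 0 := fun w => LinearMap.congr_fun hxφ w
    have hmem : ∀ w, x w ∈ Φ.dualCoannihilator := by
      intro w
      rw [Submodule.mem_dualCoannihilator]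
      suffices Φ ≤ LinearMap.ker (Dual.eval k V (x w)) from fun ψ hψ => this hψ
      rw [hΦ, Submodule.span_le]
      rintro _ ⟨i, rfl⟩
      fin_cases i
      · exact hφx w
      · have h := LinearMap.congr_fun (hS x hx) w
        change φ (f (x w)) = 0
        rw [← Module.End.mul_apply, ← h]
        exact hφx (f w)
    refine ⟨U.liftQ (x.codRestrict _ hmem) ?_, ?_⟩
    · rw [LinearMap.ker_codRestrict]
      exact hkill x hx hxv
    · ext w
      rfl
  have h4 := (Submodule.finrank_mono h3).trans (LinearMap.finrank_range_le extend)
  rw [Module.finrank_linearMap, hQ, hW] at h4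
  rw [finrank_top] at h1
  omega

/-- over a field `k`, the centralizer of a nonzero nilpotent
`n × n` matrix `y` (`n ≥ 2`), as a `k`-linear subspace of the space of matrices,
has dimension at most `n² − 2n + 2`; equivalently the conjugation orbit of `y`
has dimension at least `2(n − 1)`, twice the minimal half-dimension of a nonzero
nilpotent coadjoint orbit in type `A_{n−1}`. -/
theorem centralizer_of_nilpotent_dim_le (k : Type) [Field k] (n : ℕ) (hn : 2 ≤ n)
    (y : Matrix (Fin n) (Fin n) k) (hy : IsNilpotent y) (hy0 : y ≠ 0)
    (Z : Submodule k (Matrix (Fin n) (Fin n) k))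
    (hZ : ∀ x, x ∈ Z ↔ x * y = y * x) :
    Module.finrank k Z ≤ n ^ 2 - 2 * n + 2 := by
  let e : Matrix (Fin n) (Fin n) k ≃ₐ[k] End k (Fin n → k) := Matrix.toLinAlgEquiv'
  have h := finrank_centralizer_le (e y) (hy.map e) (by simpa using hy0)
    (Z.map e.toLinearEquiv.toLinearMap) (by
      rintro _ ⟨x, hx, rfl⟩
      change e x * e y = e y * e x
      rw [← map_mul, ← map_mul, (hZ x).1 hx])
  replace h := (LinearEquiv.finrank_map_eq e.toLinearEquiv Z).symm.le.trans h
  rw [Module.finrank_fin_fun] at h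
  obtain ⟨m, rfl⟩ := Nat.exists_eq_add_of_le hn
  refine h.trans (le_of_eq ?_)
  have h2 : (2 + m) ^ 2 - 2 * (2 + m) = m * m + 2 * m := by
    apply Nat.sub_eq_of_eq_add
    ring
  rw [h2, Nat.add_sub_cancel_left]
  ring
end
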